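/- For every real c with 0 < c < 1, the limit as n → ∞ of log₂|𝒞(n,c)| / C(n,2) exists and equals h(c), where C(n,2) = n(n−1)/2. -/

import Mathlib

/-!
The upper bound on the number of graphs without induced 5-cycle goes through shattering. By the
inequality of Pajor (`Finset.card_le_card_shatterer`), a family of edge sets has at most as many
members as it shatters sets. If the edge sets of graphs without induced `C₅` shatter `S`, then `S`
contains no complete tripartite graph with parts of sizes `4`, `2 ^ 4`, `2 ^ 20`: otherwise some
graph of the family would have an arbitrary prescribed pattern between the three parts, and the
universal pattern forces an induced `C₅` whatever happens inside the parts
(`hasInducedC5_of_universal`, `not_tripartite_of_shatters`). By the regularity lemma and triangle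
counting, such an `S` lies, up to `ε n²` pairs, inside a triangle-free blow-up with a bounded number
of parts (`exists_container`). There are only `2 ^ o(n²)` such blow-ups, and each has at most `n²/4`
edges by the theorem of Mantel. Since moreover `S` has at most as many elements as the graphs have
edges, a weighted count (`weighted_count`, `card_C5Free_le`) with an optimal weight yields the
exponent `H(2κ)/2` with `κ = min c (1/4)`.

For the lower bound (`card_C5Free_ge`), split the vertices into halves, an independent one and one
carrying a complete multipartite graph (an independent set joined to a clique), and choose the
crossing edges freely; such graphs have no induced `C₅`. When `c ≤ 1/4` essentially all edges are
crossing edges, and when `1/4 ≤ c ≤ 1/2` the size of the independent set is adjusted so that about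
half of the crossing pairs are edges. Together these give the limit for `c ≤ 1/2`
(`tendsto_C5Free`), and the case `c > 1/2` follows since `C₅` is self-complementary
(`card_C5Free_compl`).
-/

open Finset SimpleGraph
open scoped Classical

/-- Binary entropy with base-2 logarithm. -/
noncomputable def binEnt (x : ℝ) : ℝ := -(x * Real.logb 2 x) - (1 - x) * Real.logb 2 (1 - x)

/-- The function `h(c)` from the paper. -/
noncomputable def hfun (c : ℝ) : ℝ :=
  if c < 1/4 then binEnt (2*c) / 2
  else if c ≤ 3/4 then 1/2
  else binEnt (2*c - 1) / 2
/-- Number of edges of a graph. -/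
noncomputable def edgeCount {V : Type} (G : SimpleGraph V) : ℕ := Nat.card G.edgeSet
/-- `G` contains an induced cycle of length 5, i.e. an induced copy of `C₅`. -/
def HasInducedC5 {V : Type} (G : SimpleGraph V) : Prop :=
  Nonempty (SimpleGraph.cycleGraph 5 ↪g G)

/-- `𝒞(n,c)`: the graphs on vertex set `{1,…,n}` with exactly `⌊c·C(n,2)⌋` edges and no
induced cycle of length 5. -/
noncomputable def Cset (n : ℕ) (c : ℝ) : Finset (SimpleGraph (Fin n)) :=
  univ.filter fun G => ¬ HasInducedC5 G ∧ edgeCount G = ⌊c * (n.choose 2 : ℝ)⌋₊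

/-! ### Complete tripartite subgraphs from many triangles -/

/-- Double counting: in a bipartite graph of density at least `δ` whose side `X` is large, some `a`-subset
of `X` has a common neighbourhood covering a positive proportion of `Y`, which depends
only on `a` and `δ`. -/
lemma exists_common_nbhd (a : ℕ) (δ : ℝ) (hδ : 0 < δ) :
    ∃ δ' : ℝ, 0 < δ' ∧ ∃ n₀ : ℕ, ∀ (X Y : Type) [Fintype X] [Fintype Y] (R : X → Y → Prop),
      n₀ ≤ Fintype.card X →
      δ * Fintype.card X * Fintype.card Y ≤ #{p : X × Y | R p.1 p.2} →
      ∃ A : Finset X, #A = a ∧ δ' * Fintype.card Y ≤ #{y : Y | ∀ x ∈ A, R x y} := by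
  refine ⟨δ / 2 * (δ / 4) ^ a, by positivity, ⌈4 * a / δ⌉₊ + a + 1, ?_⟩
  intro X Y _ _ R hn hR
  set n := Fintype.card X with hndef
  have hn0 : (4 * a / δ : ℝ) ≤ n := (Nat.le_ceil _).trans (Nat.cast_le.2 (by omega))
  have hna : a ≤ n := by omega
  have hnpos : (0 : ℝ) < n := by exact_mod_cast (by omega : 0 < n)
  have hn4 : 4 * a ≤ δ * n := by
    rw [div_le_iff₀ hδ] at hn0; linarith
  let N : Y → Finset X := fun y => {x | R x y}
  have hsumd : (#{p : X × Y | R p.1 p.2} : ℝ) = ∑ y : Y, (#(N y) : ℝ) := by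
    rw [← Nat.cast_sum]
    congr 1
    simp only [N, card_filter, Fintype.sum_prod_type]
    rw [sum_comm]
  rw [hsumd] at hR
  let good : Finset Y := {y | δ * n / 2 ≤ #(N y)}
  have hgood : δ / 2 * Fintype.card Y ≤ #good := by
    have h1 : ∑ y : Y, (#(N y) : ℝ) ≤ ∑ y : Y, ((if y ∈ good then (n : ℝ) else 0) + δ * n / 2) := by
      refine sum_le_sum fun y _ => ?_
      split_ifs with h
      · have : (#(N y) : ℝ) ≤ n := by exact_mod_cast card_le_univ _
        have : 0 ≤ δ * n / 2 := by positivity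
        linarith
      · simp only [good, mem_filter, mem_univ, true_and, not_le] at h
        linarith
    rw [sum_add_distrib, sum_ite_mem, sum_const, univ_inter, sum_const, card_univ, nsmul_eq_mul,
      nsmul_eq_mul] at h1
    have h2 : n * (δ / 2 * Fintype.card Y) ≤ (n : ℝ) * #good := by linarith
    exact le_of_mul_le_mul_left h2 hnpos
  have hcount : ∑ A ∈ powersetCard a (univ : Finset X), (#{y : Y | ∀ x ∈ A, R x y} : ℝ)
      = ∑ y : Y, ((#(N y)).choose a : ℝ) := by
    simp only [card_filter]
    push_cast
    rw [sum_comm]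
    refine sum_congr rfl fun y _ => ?_
    rw [← card_powersetCard, ← sum_filter, sum_const, nsmul_eq_mul, mul_one]
    congr 2
    ext A
    simp [mem_powersetCard, N, subset_iff, and_comm]
  have hlow : #good * ((δ * n / 4) ^ a / a.factorial) ≤ ∑ y : Y, ((#(N y)).choose a : ℝ) := by
    rw [← nsmul_eq_mul, ← sum_const]
    refine (sum_le_sum fun y hy => ?_).trans
      (sum_le_sum_of_subset_of_nonneg (subset_univ good) fun _ _ _ => by positivity)
    simp only [good, mem_filter, mem_univ, true_and] at hy
    have h1 := Nat.pow_le_choose (α := ℝ) a (#(N y))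
    have hle : a ≤ #(N y) := by
      have : (a : ℝ) ≤ #(N y) := by
        have : (0 : ℝ) ≤ a := by positivity
        linarith
      exact_mod_cast this
    refine le_trans ?_ h1
    gcongr
    rw [Nat.cast_sub (by omega)]
    push_cast
    linarith
  obtain ⟨A, hA, hA'⟩ := exists_le_of_sum_le (s := powersetCard a (univ : Finset X))
    (f := fun _ => δ / 2 * (δ / 4) ^ a * Fintype.card Y)
    (g := fun A => (#{y : Y | ∀ x ∈ A, R x y} : ℝ))
    (by rw [powersetCard_nonempty]; simpa using hna) (by
      rw [hcount]
      refine le_trans ?_ hlow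
      rw [sum_const, card_powersetCard, card_univ, nsmul_eq_mul]
      have h2 : ((n.choose a : ℕ) : ℝ) ≤ n ^ a / a.factorial := Nat.choose_le_pow_div a n
      calc ((n.choose a : ℕ) : ℝ) * (δ / 2 * (δ / 4) ^ a * Fintype.card Y)
          ≤ (n ^ a / a.factorial) * (δ / 2 * (δ / 4) ^ a * Fintype.card Y) := by gcongr
        _ = (δ / 2 * Fintype.card Y) * ((δ * n / 4) ^ a / a.factorial) := by
            rw [show δ * n / 4 = n * (δ / 4) by ring, mul_pow]; ring
        _ ≤ _ := by gcongr)
  exact ⟨A, (mem_powersetCard.1 hA).2, hA'⟩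

/-- `G` contains a complete tripartite graph with parts of sizes `p`, `q`, `r` as a subgraph; nothing
is required of the pairs inside a part. The parts are automatically disjoint. -/
def HasTripartite {V : Type} (G : SimpleGraph V) (p q r : ℕ) : Prop :=
  ∃ A B C : Finset V, #A = p ∧ #B = q ∧ #C = r ∧ (∀ a ∈ A, ∀ b ∈ B, G.Adj a b) ∧
    (∀ a ∈ A, ∀ c ∈ C, G.Adj a c) ∧ ∀ b ∈ B, ∀ c ∈ C, G.Adj b c

/-- A graph with a positive density of triangles contains every fixed complete tripartite graph: apply
`exists_common_nbhd` to vertices against adjacent pairs, and then to the resulting dense graph. -/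
lemma exists_tripartite (p q r : ℕ) (hp : 0 < p) (hq : 0 < q) (hr : 0 < r) (δ : ℝ) (hδ : 0 < δ) :
    ∃ n₀ : ℕ, ∀ n ≥ n₀, ∀ G : SimpleGraph (Fin n),
      δ * n ^ 3 ≤ #{t : Fin n × Fin n × Fin n | G.Adj t.1 t.2.1 ∧ G.Adj t.1 t.2.2 ∧
        G.Adj t.2.1 t.2.2} → HasTripartite G p q r := by
  obtain ⟨δ₁, hδ₁, n₁, h₁⟩ := exists_common_nbhd p δ hδ
  obtain ⟨δ₂, hδ₂, n₂, h₂⟩ := exists_common_nbhd q δ₁ hδ₁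
  refine ⟨n₁ + n₂ + ⌈r / δ₂⌉₊, fun n hn G hG => ?_⟩
  obtain ⟨A, hA, hA'⟩ := h₁ (Fin n) (Fin n × Fin n)
    (fun a t => G.Adj a t.1 ∧ G.Adj a t.2 ∧ G.Adj t.1 t.2) (by simp; omega)
    (by simp only [Fintype.card_fin, Fintype.card_prod]
        push_cast
        exact le_trans (le_of_eq (by ring)) (hG.trans (le_of_eq (by congr!))))
  obtain ⟨B, hB, hB'⟩ := h₂ (Fin n) (Fin n)
    (fun b c => ∀ a ∈ A, G.Adj a b ∧ G.Adj a c ∧ G.Adj b c) (by simp; omega) (by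
      simp only [Fintype.card_fin, Fintype.card_prod] at hA' ⊢; push_cast at hA'
      rw [mul_assoc]; exact hA'.trans (le_of_eq (by congr!)))
  have hrc : r ≤ #{c : Fin n | ∀ b ∈ B, ∀ a ∈ A, G.Adj a b ∧ G.Adj a c ∧ G.Adj b c} := by
    have h3 : (r / δ₂ : ℝ) ≤ n := (Nat.le_ceil _).trans (by exact_mod_cast (by omega))
    rw [div_le_iff₀ hδ₂] at h3
    rw [Fintype.card_fin] at hB'
    have : (r : ℝ) ≤ #{c : Fin n | ∀ b ∈ B, ∀ a ∈ A, G.Adj a b ∧ G.Adj a c ∧ G.Adj b c} :=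
      (h3.trans (le_of_eq (mul_comm _ _))).trans (hB'.trans (le_of_eq (by congr!)))
    exact_mod_cast this
  obtain ⟨C', hC', hC'r⟩ := exists_subset_card_eq hrc
  obtain ⟨a₀, ha₀⟩ : A.Nonempty := card_pos.1 (by omega)
  obtain ⟨b₀, hb₀⟩ : B.Nonempty := card_pos.1 (by omega)
  obtain ⟨c₀, hc₀⟩ : C'.Nonempty := card_pos.1 (by omega)
  have key : ∀ c ∈ C', ∀ b ∈ B, ∀ a ∈ A, G.Adj a b ∧ G.Adj a c ∧ G.Adj b c := fun c hc => by
    simpa using hC' hc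
  exact ⟨A, B, C', hA, hB, hC'r, fun a ha b hb => (key c₀ hc₀ b hb a ha).1,
    fun a ha c hc => (key c hc b₀ hb₀ a ha).2.1, fun b hb c hc => (key c hc b hb a₀ ha₀).2.2⟩

/-! ### Universal patterns force an induced 5-cycle -/

/-- An induced path `w x y z` together with a vertex `c` whose neighbours on the path are exactly its
ends is an induced 5-cycle. Distinctness of the five vertices is automatic, as no two vertices of
`C₅` have the same neighbourhood. -/
lemma hasInducedC5_of_path {V : Type} {G : SimpleGraph V} {w x y z c : V}
    (hwx : G.Adj w x) (hxy : G.Adj x y) (hyz : G.Adj y z)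
    (hwy : ¬ G.Adj w y) (hxz : ¬ G.Adj x z) (hwz : ¬ G.Adj w z)
    (hcw : G.Adj c w) (hcz : G.Adj c z) (hcx : ¬ G.Adj c x) (hcy : ¬ G.Adj c y) :
    HasInducedC5 G := by
  have key : ∀ i j : Fin 5, G.Adj (![w, x, y, z, c] i) (![w, x, y, z, c] j) ↔
      (cycleGraph 5).Adj i j := by
    have h1 := hwx.symm
    have h2 := hxy.symm
    have h3 := hyz.symm
    have h4 := hcw.symm
    have h5 := hcz.symm
    have h6 : ¬ G.Adj y w := fun h => hwy h.symm
    have h7 : ¬ G.Adj z x := fun h => hxz h.symm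
    have h8 : ¬ G.Adj z w := fun h => hwz h.symm
    have h9 : ¬ G.Adj x c := fun h => hcx h.symm
    have h10 : ¬ G.Adj y c := fun h => hcy h.symm
    intro i j
    fin_cases i <;> fin_cases j <;> simp [cycleGraph_adj, *] <;> first | done | decide
  have hne : ∀ i j : Fin 5, i ≠ j → ∃ k, (cycleGraph 5).Adj i k ∧ ¬ (cycleGraph 5).Adj j k := by
    simp only [cycleGraph_adj]; decide
  refine ⟨⟨⟨![w, x, y, z, c], fun i j hij => ?_⟩, fun {i j} => key i j⟩⟩
  by_contra h
  obtain ⟨k, hk, hk'⟩ := hne i j h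
  rw [← key] at hk hk'
  rw [hij] at hk
  exact hk' hk

/-- Index set of the first part of the universal tripartite pattern. -/
abbrev PatA := Fin 4
/-- Index set of the second part of the universal pattern: one vertex for each prescribed adjacency
to the first part. -/
abbrev PatB := PatA → Bool
/-- Index set of the third part of the universal pattern: one vertex for each prescribed adjacency
to the first two parts. -/
abbrev PatC := PatA ⊕ PatB → Bool

/-- The universal pattern between three classes of vertices forces an induced 5-cycle, whatever the
adjacencies inside the classes are. -/
lemma hasInducedC5_of_universal {V : Type} {G : SimpleGraph V} (α : PatA → V) (β : PatB → V)
    (γ : PatC → V) (hαβ : ∀ i f, G.Adj (α i) (β f) ↔ f i = true)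
    (hαγ : ∀ i g, G.Adj (γ g) (α i) ↔ g (.inl i) = true)
    (hβγ : ∀ f g, G.Adj (γ g) (β f) ↔ g (.inr f) = true) : HasInducedC5 G := by
  have hba : ∀ i f, G.Adj (β f) (α i) ↔ f i = true := fun i f => by rw [G.adj_comm, hαβ]
  -- a vertex of the third class joined to exactly two prescribed vertices of the first two classes
  have hc : ∀ s t : PatA ⊕ PatB, ∃ c : V, ∀ u, G.Adj c (Sum.elim α β u) ↔ u = s ∨ u = t := by
    intro s t
    refine ⟨γ fun u => decide (u = s ∨ u = t), fun u => ?_⟩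
    rcases u with i | f
    · simp [hαγ]
    · simp [hβγ]
  have hne : ∀ f g : PatB, ∀ i, f i ≠ g i → f ≠ g := fun f g i h e => h (by rw [e])
  -- `k1` to `k4`: for each of the four adjacency patterns of the pairs `α i, α j` and `β f, β g`,
  -- suitable values of `f` and `g` give an induced path, which a vertex of the third class closes up
  have k1 : ∀ i j, i ≠ j → ∀ f g : PatB, ¬ G.Adj (α i) (α j) → f i = true → f j = true → g i = true →
      g j = false → ¬ G.Adj (β f) (β g) → HasInducedC5 G := by
    intro i j hij f g h1 fi fj gi gj h2
    have h1' : ¬ G.Adj (α j) (α i) := fun h => h1 h.symm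
    obtain ⟨c, hc⟩ := hc (.inl j) (.inr g)
    have hfg := hne f g j (by simp [*])
    have a1 := hc (.inl i); have a2 := hc (.inl j); have a3 := hc (.inr f); have a4 := hc (.inr g)
    simp only [Sum.elim_inl, Sum.elim_inr] at a1 a2 a3 a4
    refine hasInducedC5_of_path (w := α j) (x := β f) (y := α i) (z := β g) (c := c)
      ?_ ?_ ?_ ?_ ?_ ?_ ?_ ?_ ?_ ?_ <;>
      simp [hαβ, hba, a1, a2, a3, a4, fi, fj, gi, gj, h2, h1', hij, hfg]
  have k2 : ∀ i j, i ≠ j → ∀ f g : PatB, ¬ G.Adj (α i) (α j) → f i = true → f j = false → g i = false →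
      g j = true → G.Adj (β f) (β g) → HasInducedC5 G := by
    intro i j hij f g h1 fi fj gi gj h2
    have h1' : ¬ G.Adj (α j) (α i) := fun h => h1 h.symm
    obtain ⟨c, hc⟩ := hc (.inl i) (.inl j)
    have hfg := hne f g j (by simp [*])
    have a1 := hc (.inl i); have a2 := hc (.inl j); have a3 := hc (.inr f); have a4 := hc (.inr g)
    simp only [Sum.elim_inl, Sum.elim_inr] at a1 a2 a3 a4
    refine hasInducedC5_of_path (w := α i) (x := β f) (y := β g) (z := α j) (c := c)
      ?_ ?_ ?_ ?_ ?_ ?_ ?_ ?_ ?_ ?_ <;>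
      simp [hαβ, hba, a1, a2, a3, a4, fi, fj, gi, gj, h1, h2, hij, hij.symm]
  have k3 : ∀ i j, i ≠ j → ∀ f g : PatB, G.Adj (α i) (α j) → f i = false → f j = true → g i = false →
      g j = false → G.Adj (β f) (β g) → HasInducedC5 G := by
    intro i j hij f g h1 fi fj gi gj h2
    obtain ⟨c, hc⟩ := hc (.inl i) (.inr g)
    have hfg := hne f g j (by simp [*])
    have a1 := hc (.inl i); have a2 := hc (.inl j); have a3 := hc (.inr f); have a4 := hc (.inr g)
    simp only [Sum.elim_inl, Sum.elim_inr] at a1 a2 a3 a4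
    refine hasInducedC5_of_path (w := α i) (x := α j) (y := β f) (z := β g) (c := c)
      ?_ ?_ ?_ ?_ ?_ ?_ ?_ ?_ ?_ ?_ <;>
      simp [hαβ, a1, a2, a3, a4, fi, fj, gi, gj, h1, h2, hij.symm, hfg]
  have k4 : ∀ i j, i ≠ j → ∀ f g : PatB, G.Adj (α i) (α j) → f i = true → f j = false → g i = false →
      g j = true → ¬ G.Adj (β f) (β g) → HasInducedC5 G := by
    intro i j hij f g h1 fi fj gi gj h2
    obtain ⟨c, hc⟩ := hc (.inr f) (.inr g)
    have hfg := hne f g j (by simp [*])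
    have a1 := hc (.inl i); have a2 := hc (.inl j); have a3 := hc (.inr f); have a4 := hc (.inr g)
    simp only [Sum.elim_inl, Sum.elim_inr] at a1 a2 a3 a4
    refine hasInducedC5_of_path (w := β f) (x := α i) (y := α j) (z := β g) (c := c)
      ?_ ?_ ?_ ?_ ?_ ?_ ?_ ?_ ?_ ?_ <;>
      simp [hαβ, hba, a1, a2, a3, a4, fi, fj, gi, gj, h1, h2, hfg, hfg.symm]
  -- `f` and `g` are chosen so that non-adjacency of `β f`, `β g` gives a 5-cycle with `α 0, α 1`,
  -- and adjacency gives one with `α 2, α 3`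
  by_cases h01 : G.Adj (α 0) (α 1) <;> by_cases h23 : G.Adj (α 2) (α 3)
  · by_cases h : G.Adj (β ![true, false, false, true]) (β ![false, true, false, false])
    · exact k3 2 3 (by decide) _ _ h23 rfl rfl rfl rfl h
    · exact k4 0 1 (by decide) _ _ h01 rfl rfl rfl rfl h
  · by_cases h : G.Adj (β ![true, false, true, false]) (β ![false, true, false, true])
    · exact k2 2 3 (by decide) _ _ h23 rfl rfl rfl rfl h
    · exact k4 0 1 (by decide) _ _ h01 rfl rfl rfl rfl h
  · by_cases h : G.Adj (β ![true, true, false, true]) (β ![true, false, false, false])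
    · exact k3 2 3 (by decide) _ _ h23 rfl rfl rfl rfl h
    · exact k1 0 1 (by decide) _ _ h01 rfl rfl rfl rfl h
  · by_cases h : G.Adj (β ![true, true, true, false]) (β ![true, false, false, true])
    · exact k2 2 3 (by decide) _ _ h23 rfl rfl rfl rfl h
    · exact k1 0 1 (by decide) _ _ h01 rfl rfl rfl rfl h

/-- A family of edge sets of graphs without induced 5-cycle cannot shatter the edge set of a large
complete tripartite graph: shattering would realise the universal pattern on the three parts. -/
lemma not_tripartite_of_shatters {p q r : ℕ} (hp : p = Fintype.card PatA)
    (hq : q = Fintype.card PatB) (hr : r = Fintype.card PatC) {n : ℕ} {𝒜 : Finset (Finset (Sym2 (Fin n)))}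
    (h𝒜 : ∀ u ∈ 𝒜, ¬ HasInducedC5 (fromEdgeSet (u : Set (Sym2 (Fin n)))))
    {S : Finset (Sym2 (Fin n))} (hS : 𝒜.Shatters S) :
    ¬ HasTripartite (fromEdgeSet (S : Set (Sym2 (Fin n)))) p q r := by
  rintro ⟨A, B, C, hA, hB, hC, hAB, hAC, hBC⟩
  have eA : PatA ≃ A := Fintype.equivOfCardEq (by rw [Fintype.card_coe, hA, hp])
  have eB : PatB ≃ B := Fintype.equivOfCardEq (by rw [Fintype.card_coe, hB, hq])
  have eC : PatC ≃ C := Fintype.equivOfCardEq (by rw [Fintype.card_coe, hC, hr])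
  obtain ⟨α, hα, hαi⟩ : ∃ α : PatA → Fin n, (∀ i, α i ∈ A) ∧ Function.Injective α :=
    ⟨fun i => eA i, fun i => (eA i).2, Subtype.val_injective.comp eA.injective⟩
  obtain ⟨β, hβ, hβi⟩ : ∃ β : PatB → Fin n, (∀ i, β i ∈ B) ∧ Function.Injective β :=
    ⟨fun i => eB i, fun i => (eB i).2, Subtype.val_injective.comp eB.injective⟩
  obtain ⟨γ, hγ, hγi⟩ : ∃ γ : PatC → Fin n, (∀ i, γ i ∈ C) ∧ Function.Injective γ :=
    ⟨fun i => eC i, fun i => (eC i).2, Subtype.val_injective.comp eC.injective⟩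
  have hαβ : ∀ i f, s(α i, β f) ∈ S ∧ α i ≠ β f := fun i f => by
    simpa using hAB _ (hα i) _ (hβ f)
  have hαγ : ∀ i g, s(γ g, α i) ∈ S ∧ γ g ≠ α i := fun i g => by
    simpa using (hAC _ (hα i) _ (hγ g)).symm
  have hβγ : ∀ f g, s(γ g, β f) ∈ S ∧ γ g ≠ β f := fun f g => by
    simpa using (hBC _ (hβ f) _ (hγ g)).symm
  have n1 := fun i f => (hαβ i f).2
  have n2 := fun i f => (hαγ i f).2
  have n3 := fun i f => (hβγ i f).2
  obtain ⟨u, hu, hut⟩ := hS (t := S.filter fun e =>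
    (∃ i f, f i = true ∧ e = s(α i, β f)) ∨ (∃ i g, g (.inl i) = true ∧ e = s(γ g, α i)) ∨
      ∃ f g, g (.inr f) = true ∧ e = s(γ g, β f)) (filter_subset _ _)
  have hmem : ∀ e ∈ S, (e ∈ u ↔ (∃ i f, f i = true ∧ e = s(α i, β f)) ∨
      (∃ i g, g (.inl i) = true ∧ e = s(γ g, α i)) ∨
      ∃ f g, g (.inr f) = true ∧ e = s(γ g, β f)) := fun e he => by
    have := congrArg (e ∈ ·) hut
    simpa [he] using this
  refine h𝒜 u hu (hasInducedC5_of_universal α β γ ?_ ?_ ?_)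
  · intro i f
    rw [fromEdgeSet_adj, mem_coe, hmem _ (hαβ i f).1]
    simp only [n1, ne_eq, not_false_eq_true, and_true, Sym2.eq_iff, hαi.eq_iff, hβi.eq_iff,
      fun i g => (n2 i g).symm, fun i g => (n3 i g).symm, fun i f => (n1 i f).symm]
    simp
  · intro i g
    rw [fromEdgeSet_adj, mem_coe, hmem _ (hαγ i g).1]
    simp only [n1, ne_eq, not_false_eq_true, and_true, Sym2.eq_iff, hαi.eq_iff, hγi.eq_iff,
      fun i g => (n2 i g).symm, n2, n3]
    simp
  · intro f g
    rw [fromEdgeSet_adj, mem_coe, hmem _ (hβγ f g).1]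
    simp only [ne_eq, not_false_eq_true, and_true, Sym2.eq_iff, hβi.eq_iff, hγi.eq_iff,
      fun i g => (n3 i g).symm, n2, n3, fun i f => (n1 i f).symm]
    simp

/-! ### Triangle-free blow-ups as containers -/

/-- The triangle-free graphs on `Fin n` that are blow-ups of a graph with at most `K` vertices:
adjacency of `u` and `v` depends only on the parts `f u` and `f v`. -/
noncomputable def blowups (n K : ℕ) : Finset (SimpleGraph (Fin n)) :=
  univ.filter fun B => B.CliqueFree 3 ∧
    ∃ (f : Fin n → Fin K) (R : Fin K → Fin K → Prop), ∀ u v, B.Adj u v ↔ R (f u) (f v)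

lemma card_blowups_le (n K : ℕ) : #(blowups n K) ≤ K ^ n * 2 ^ (K * K) := by
  let T : (Fin n → Fin K) × (Fin K → Fin K → Prop) → SimpleGraph (Fin n) := fun p =>
    SimpleGraph.fromRel fun u v => p.2 (p.1 u) (p.1 v)
  have hsub : blowups n K ⊆ univ.image T := by
    intro B hB
    simp only [blowups, mem_filter, mem_univ, true_and] at hB
    obtain ⟨-, f, R, h⟩ := hB
    rw [mem_image]
    refine ⟨(f, R), mem_univ _, ?_⟩
    ext u v
    simp only [T, fromRel_adj, ← h]
    constructor
    · rintro ⟨-, h | h⟩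
      exacts [h, h.symm]
    · exact fun h => ⟨h.ne, .inl h⟩
  refine (card_le_card hsub).trans (card_image_le.trans (le_of_eq ?_))
  rw [card_univ]
  simp [← pow_mul]

/-- By regularity, a graph without a fixed complete tripartite subgraph lies, up to `ε n²` edges, in a
triangle-free blow-up with a bounded number of parts, namely that of the reduced graph of a regular
partition: a triangle in it would give a positive density of triangles in the graph. -/
lemma exists_container (p q r : ℕ) (hp : 0 < p) (hq : 0 < q) (hr : 0 < r) (ε : ℝ) (hε : 0 < ε)
    (hε1 : ε ≤ 1) :
    ∃ K n₀ : ℕ, ∀ n ≥ n₀, ∀ G : SimpleGraph (Fin n), ¬ HasTripartite G p q r →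
      ∃ B ∈ blowups n K, (#(G.edgeFinset \ B.edgeFinset) : ℝ) ≤ ε * n ^ 2 := by
  -- the constants match those of `regularityReduced_edges_card_aux`
  set K := SzemerediRegularity.bound (ε / 8) ⌈4 / ε⌉₊ with hK
  have hKpos : 0 < K := SzemerediRegularity.bound_pos _ _
  obtain ⟨n₁, h₁⟩ := exists_tripartite p q r hp hq hr
    ((1 - 2 * (ε / 8)) * (ε / 8) ^ 3 * (1 / (2 * K)) ^ 3) (by
      have : 0 < 1 - 2 * (ε / 8) := by linarith
      positivity)
  refine ⟨K, n₁ + ⌈4 / ε⌉₊ + 1, fun n hn G hG => ?_⟩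
  have hne : Nonempty (Fin n) := ⟨⟨0, by omega⟩⟩
  obtain ⟨P, hP₁, hP₂, hP₃, hP₄⟩ := szemeredi_regularity G (by positivity : 0 < ε / 8)
    (l := ⌈4 / ε⌉₊) (by rw [Fintype.card_fin]; omega)
  rw [← hK] at hP₃
  have hP' : 4 / ε ≤ #P.parts := (Nat.le_ceil _).trans (Nat.cast_le.2 hP₂)
  have hred := regularityReduced_edges_card_aux hε hP₁ hP₄ hP'
  let D : Finset (Fin n) → Finset (Fin n) → Prop := fun U V =>
    U ≠ V ∧ G.IsUniform (ε / 8) U V ∧ ε / 4 ≤ G.edgeDensity U V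
  let B : SimpleGraph (Fin n) :=
    { Adj := fun u v => D (P.part u) (P.part v)
      symm := ⟨fun u v h => ⟨h.1.symm, h.2.1.symm, by rw [G.edgeDensity_comm]; exact h.2.2⟩⟩
      loopless := ⟨fun u h => h.1 rfl⟩ }
  have hBG : ∀ u v, (G.regularityReduced P (ε / 8) (ε / 4)).Adj u v ↔ G.Adj u v ∧ B.Adj u v := by
    intro u v
    rw [regularityReduced_adj]
    refine and_congr_right fun _ => ?_
    constructor
    · rintro ⟨U, hU, V, hV, hu, hv, h⟩
      have e1 := P.part_eq_of_mem hU hu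
      have e2 := P.part_eq_of_mem hV hv
      change D (P.part u) (P.part v)
      rw [e1, e2]
      exact h
    · intro h
      exact ⟨P.part u, P.part_mem.2 (mem_univ _), P.part v, P.part_mem.2 (mem_univ _),
        P.mem_part (mem_univ _), P.mem_part (mem_univ _), h⟩
  refine ⟨B, ?_, ?_⟩
  · simp only [blowups, mem_filter, mem_univ, true_and]
    constructor
    · intro t ht
      rw [is3Clique_iff] at ht
      obtain ⟨x, y, z, ⟨nxy, uxy, dxy⟩, ⟨nxz, uxz, dxz⟩, ⟨nyz, uyz, dyz⟩, -⟩ := ht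
      have that : 2 * (ε / 8) = ε / 4 := by ring
      have htc := G.triangle_counting' (by rwa [that]) uxy (by rwa [that]) uxz (by rwa [that]) uyz
      refine hG (h₁ n (by omega) G ?_)
      have hcard : ∀ x : Fin n, (n : ℝ) * (1 / (2 * K)) ≤ #(P.part x) := by
        intro x
        have hle : Fintype.card (Fin n) / #P.parts ≤ #(P.part x) :=
          hP₁.average_le_card_part (P.part_mem.2 (mem_univ x))
        rw [Fintype.card_fin] at hle
        have hk0 : 0 < #P.parts := card_pos.2 ⟨_, P.part_mem.2 (mem_univ x)⟩
        have hkn : #P.parts ≤ n := by simpa using P.card_parts_le_card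
        have h3 : n < 2 * #P.parts * (n / #P.parts) := by
          have e1 := Nat.div_add_mod n #P.parts
          have e2 := Nat.mod_lt n hk0
          have e3 : #P.parts * 1 ≤ #P.parts * (n / #P.parts) :=
            Nat.mul_le_mul_left _ ((Nat.one_le_div_iff hk0).2 hkn)
          nlinarith
        have h4 : n ≤ 2 * K * #(P.part x) := h3.le.trans (by gcongr)
        have h5 : (n : ℝ) ≤ 2 * K * #(P.part x) := by exact_mod_cast h4
        rw [mul_one_div, div_le_iff₀ (by positivity)]
        linarith
      have h0 : 0 ≤ 1 - 2 * (ε / 8) := by linarith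
      calc (1 - 2 * (ε / 8)) * (ε / 8) ^ 3 * (1 / (2 * K)) ^ 3 * (n : ℝ) ^ 3
          = (1 - 2 * (ε / 8)) * (ε / 8) ^ 3 * (n * (1 / (2 * K))) * (n * (1 / (2 * K))) *
              (n * (1 / (2 * K))) := by ring
        _ ≤ (1 - 2 * (ε / 8)) * (ε / 8) ^ 3 * #(P.part x) * #(P.part y) * #(P.part z) := by
            gcongr <;> exact hcard _
        _ ≤ _ := htc
        _ ≤ _ := by
            refine Nat.cast_le.2 (card_le_card ?_)
            rintro ⟨a, b, c⟩ h
            simp only [mem_filter, mem_univ, true_and] at h ⊢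
            exact h.2
    · obtain ⟨e⟩ : Nonempty (P.parts ↪ Fin K) :=
        Function.Embedding.nonempty_of_card_le (by simpa using hP₃)
      refine ⟨fun u => e ⟨P.part u, P.part_mem.2 (mem_univ _)⟩,
        fun i j => ∃ U V : P.parts, e U = i ∧ e V = j ∧ D U V, fun u v => ?_⟩
      constructor
      · exact fun h => ⟨_, _, rfl, rfl, h⟩
      · rintro ⟨U, V, hU, hV, h⟩
        have e1 := e.injective hU
        have e2 := e.injective hV
        subst e1 e2
        exact h
  · have hsub : (G.regularityReduced P (ε / 8) (ε / 4)).edgeFinset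
        = G.edgeFinset \ (G.edgeFinset \ B.edgeFinset) := by
      ext e
      induction e with | _ u v
      simp only [mem_edgeFinset, mem_edgeSet, mem_sdiff, hBG]
      tauto
    have hc := card_sdiff_add_card_eq_card (sdiff_subset : G.edgeFinset \ B.edgeFinset ⊆ G.edgeFinset)
    have hc' : (#(G.regularityReduced P (ε / 8) (ε / 4)).edgeFinset : ℝ)
        + #(G.edgeFinset \ B.edgeFinset) = #G.edgeFinset := by
      rw [← hc, Nat.cast_add, ← hsub]
    rw [Fintype.card_fin] at hred
    push_cast at hred
    have hred' : 2 * ((#G.edgeFinset : ℝ) - #(G.regularityReduced P (ε / 8) (ε / 4)).edgeFinset)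
        < 2 * ε * n ^ 2 := by
      convert hred
    have hgoal : (#(G.edgeFinset \ B.edgeFinset) : ℝ) ≤ ε * n ^ 2 := by linarith
    convert hgoal

/-! ### The upper bound on the number of graphs -/

/-- A weighted count of the sets of size at most `m` that have at most `d` elements outside `B`. -/
lemma weighted_count {α : Type} [Fintype α] [DecidableEq α] (𝒮 : Finset (Finset α)) (B : Finset α)
    (m d : ℕ) (x y : ℝ) (hx : 0 < x) (hx1 : x ≤ 1) (hy : 0 < y) (hy1 : y ≤ 1)
    (h : ∀ S ∈ 𝒮, #S ≤ m ∧ #(S \ B) ≤ d) :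
    #𝒮 * (x ^ m * y ^ d) ≤ (1 + x) ^ #B * (1 + y) ^ Fintype.card α := by
  have hpow : ∀ (z : ℝ) (T : Finset α), ∑ t ∈ T.powerset, z ^ #t = (1 + z) ^ #T := by
    intro z T
    simpa [add_comm] using sum_pow_mul_eq_add_pow z 1 T
  calc #𝒮 * (x ^ m * y ^ d) = ∑ S ∈ 𝒮, x ^ m * y ^ d := by rw [sum_const, nsmul_eq_mul]
    _ ≤ ∑ S ∈ 𝒮, x ^ #(S ∩ B) * y ^ #(S \ B) := by
        refine sum_le_sum fun S hS => ?_
        have h1 := (card_le_card (inter_subset_left : S ∩ B ⊆ S)).trans (h S hS).1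
        exact mul_le_mul (pow_le_pow_of_le_one hx.le hx1 h1)
          (pow_le_pow_of_le_one hy.le hy1 (h S hS).2) (by positivity) (by positivity)
    _ = ∑ p ∈ 𝒮.image fun S => (S ∩ B, S \ B), x ^ #p.1 * y ^ #p.2 := by
        rw [sum_image]
        intro S _ T _ hST
        simp only [Prod.mk.injEq] at hST
        rw [← sdiff_union_inter S B, ← sdiff_union_inter T B, hST.1, hST.2]
    _ ≤ ∑ p ∈ B.powerset ×ˢ (univ : Finset α).powerset, x ^ #p.1 * y ^ #p.2 := by
        refine sum_le_sum_of_subset_of_nonneg ?_ fun _ _ _ => by positivity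
        intro p hp
        obtain ⟨S, -, rfl⟩ := mem_image.1 hp
        simp
    _ = (1 + x) ^ #B * (1 + y) ^ Fintype.card α := by
        rw [sum_product]
        simp only [← sum_mul_sum]
        rw [hpow, hpow, card_univ]

/-- The graphs on `Fin n` with exactly `m` edges and no induced 5-cycle. -/
noncomputable def C5Free (n m : ℕ) : Finset (SimpleGraph (Fin n)) :=
  univ.filter fun G => ¬ HasInducedC5 G ∧ edgeCount G = m

lemma edgeCount_eq {V : Type} [Fintype V] (G : SimpleGraph V) : edgeCount G = #G.edgeFinset := by
  rw [edgeCount, Nat.card_eq_fintype_card, edgeFinset_card]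

lemma mantel {n : ℕ} (B : SimpleGraph (Fin n)) (hB : B.CliqueFree 3) :
    #B.edgeFinset ≤ n ^ 2 / 4 := by
  have h := CliqueFree.card_edgeFinset_le (r := 2) hB
  simp only [Fintype.card_fin] at h
  rcases Nat.mod_two_eq_zero_or_one n with h2 | h2 <;> rw [h2] at h <;> simp at h
  · exact h
  · exact h.trans (Nat.div_le_div_right (Nat.sub_le _ _))

lemma card_sym2_le (n : ℕ) : Fintype.card (Sym2 (Fin n)) ≤ n ^ 2 := by
  rw [Sym2.card, Fintype.card_fin, Nat.choose_two_right, Nat.add_sub_cancel]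
  refine Nat.div_le_of_le_mul ?_
  nlinarith [Nat.le_mul_self n]

lemma exists_partSizes : ∃ p q r : ℕ, 0 < p ∧ 0 < q ∧ 0 < r ∧ p = Fintype.card PatA ∧
    q = Fintype.card PatB ∧ r = Fintype.card PatC :=
  ⟨_, _, _, Fintype.card_pos, Fintype.card_pos, Fintype.card_pos, rfl, rfl, rfl⟩

/-- The upper bound in product form. The sets shattered by the edge sets of `C5Free n m` have at most
`m` elements and lie almost inside a triangle-free blow-up, so by the inequality of Pajor and
the theorem of Mantel a weighted count of these sets bounds `C5Free n m`. The weights `x`, `y` are free. -/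
lemma card_C5Free_le (ε : ℝ) (hε : 0 < ε) (hε1 : ε ≤ 1) :
    ∃ K n₀ : ℕ, 0 < K ∧ ∀ n ≥ n₀, ∀ (m : ℕ) (x y : ℝ), 0 < x → x ≤ 1 → 0 < y → y ≤ 1 →
      #(C5Free n m) * (x ^ m * y ^ ⌊ε * n ^ 2⌋₊) ≤
        K ^ n * 2 ^ (K * K) * ((1 + x) ^ (n ^ 2 / 4) * (1 + y) ^ (n ^ 2)) := by
  -- the part sizes are kept as variables, so that `2 ^ 20` is never evaluated
  obtain ⟨p, q, r, hp0, hq0, hr0, hp, hq, hr⟩ := exists_partSizes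
  obtain ⟨K, n₀, hK⟩ := exists_container p q r hp0 hq0 hr0 ε hε hε1
  refine ⟨K + 1, n₀, by omega, fun n hn m x y hx hx1 hy hy1 => ?_⟩
  set d := ⌊ε * n ^ 2⌋₊
  let 𝒜 : Finset (Finset (Sym2 (Fin n))) := (C5Free n m).image fun G => G.edgeFinset
  have h𝒜card : #𝒜 = #(C5Free n m) := by
    refine card_image_of_injective _ fun G H h => ?_
    exact edgeFinset_inj.1 h
  have h𝒜 : ∀ u ∈ 𝒜, ¬ HasInducedC5 (fromEdgeSet (u : Set (Sym2 (Fin n)))) := by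
    intro u hu
    obtain ⟨G, hG, rfl⟩ := mem_image.1 hu
    rw [coe_edgeFinset, fromEdgeSet_edgeSet]
    exact (mem_filter.1 hG).2.1
  have hcov : 𝒜.shatterer ⊆ (blowups n K).biUnion fun B =>
      univ.filter fun S : Finset (Sym2 (Fin n)) => #S ≤ m ∧ #(S \ B.edgeFinset) ≤ d := by
    intro S hS
    rw [mem_shatterer] at hS
    obtain ⟨u, hu, hSu⟩ := hS.exists_superset
    obtain ⟨G, hG, rfl⟩ := mem_image.1 hu
    obtain ⟨H, hH⟩ : ∃ H, H = fromEdgeSet (S : Set (Sym2 (Fin n))) := ⟨_, rfl⟩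
    have hSe : ∀ e ∈ S, e ∈ H.edgeSet := fun e h => by
      rw [hH, edgeSet_fromEdgeSet]
      exact ⟨h, G.not_isDiag_of_mem_edgeSet (mem_edgeFinset.1 (hSu h))⟩
    obtain ⟨B, hB, hBS⟩ := hK n hn H (hH ▸ not_tripartite_of_shatters hp hq hr h𝒜 hS)
    rw [mem_biUnion]
    refine ⟨B, hB, mem_filter.2 ⟨mem_univ _, ?_, ?_⟩⟩
    · rw [← (mem_filter.1 hG).2.2, edgeCount_eq]
      exact card_le_card hSu
    · refine Nat.le_floor ?_
      refine (Nat.cast_le.2 (card_le_card fun e he => ?_)).trans hBS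
      rw [mem_sdiff] at he ⊢
      exact ⟨mem_edgeFinset.2 (hSe e he.1), he.2⟩
  have hcard := card_sym2_le n
  calc (#(C5Free n m) : ℝ) * (x ^ m * y ^ d)
      ≤ (∑ B ∈ blowups n K, #(univ.filter fun S : Finset (Sym2 (Fin n)) =>
          #S ≤ m ∧ #(S \ B.edgeFinset) ≤ d) : ℕ) * (x ^ m * y ^ d) := by
        gcongr
        rw [← h𝒜card]
        exact (card_le_card_shatterer _).trans ((card_le_card hcov).trans card_biUnion_le)
    _ ≤ ∑ B ∈ blowups n K, ((1 + x) ^ (n ^ 2 / 4) * (1 + y) ^ (n ^ 2)) := by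
        rw [Nat.cast_sum, sum_mul]
        refine sum_le_sum fun B hB => ?_
        have hw := weighted_count (univ.filter fun S : Finset (Sym2 (Fin n)) =>
          #S ≤ m ∧ #(S \ B.edgeFinset) ≤ d) B.edgeFinset m d x y hx hx1 hy hy1
          (fun S hS => (mem_filter.1 hS).2)
        refine hw.trans ?_
        have hB3 := mantel B (mem_filter.1 hB).2.1
        have h1 : (1 : ℝ) ≤ 1 + x := by linarith
        have h2 : (1 : ℝ) ≤ 1 + y := by linarith
        exact mul_le_mul (pow_le_pow_right₀ h1 hB3) (pow_le_pow_right₀ h2 hcard)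
          (by positivity) (by positivity)
    _ ≤ _ := by
        rw [sum_const, nsmul_eq_mul]
        gcongr
        have := card_blowups_le n K
        calc (#(blowups n K) : ℝ) ≤ ((K ^ n * 2 ^ (K * K) : ℕ) : ℝ) := Nat.cast_le.2 this
          _ = (K : ℝ) ^ n * 2 ^ (K * K) := by push_cast; ring
          _ ≤ _ := by
            push_cast
            gcongr <;> linarith

/-! ### The construction for the lower bound, and complementation -/

/-- The vertices of a 5-cycle cannot be coloured with `0, 1, 2` so that the colours `0` and `1`
are independent and every vertex of colour `2` is adjacent to all vertices of nonzero colour. -/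
lemma no_split_C5 : ∀ a₀ a₁ a₂ a₃ a₄ : Fin 3, ∃ i j : Fin 5, i ≠ j ∧
    ((![a₀, a₁, a₂, a₃, a₄] i = 0 ∧ ![a₀, a₁, a₂, a₃, a₄] j = 0 ∧ (i - j = 1 ∨ j - i = 1)) ∨
    (![a₀, a₁, a₂, a₃, a₄] i = 1 ∧ ![a₀, a₁, a₂, a₃, a₄] j = 1 ∧ (i - j = 1 ∨ j - i = 1)) ∨
    (![a₀, a₁, a₂, a₃, a₄] i = 2 ∧ ![a₀, a₁, a₂, a₃, a₄] j ≠ 0 ∧ ¬ (i - j = 1 ∨ j - i = 1))) := by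
  decide

/-- A graph has no induced 5-cycle if its vertices split into an independent set (colour `0`) and a
complete multipartite graph with one part of colour `1` and singleton parts of colour `2`. -/
lemma not_hasInducedC5_of_coloring {V : Type} (G : SimpleGraph V) (c : V → Fin 3)
    (h0 : ∀ u v, c u = 0 → c v = 0 → ¬ G.Adj u v) (h1 : ∀ u v, c u = 1 → c v = 1 → ¬ G.Adj u v)
    (h2 : ∀ u v, u ≠ v → c u = 2 → c v ≠ 0 → G.Adj u v) : ¬ HasInducedC5 G := by
  rintro ⟨φ⟩
  obtain ⟨i, j, hij, h⟩ := no_split_C5 (c (φ 0)) (c (φ 1)) (c (φ 2)) (c (φ 3)) (c (φ 4))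
  have hv : ∀ i : Fin 5, ![c (φ 0), c (φ 1), c (φ 2), c (φ 3), c (φ 4)] i = c (φ i) := by
    intro i; fin_cases i <;> rfl
  rw [hv, hv, ← cycleGraph_adj, ← φ.map_rel_iff] at h
  rcases h with h | h | h
  · exact h0 _ _ h.1 h.2.1 h.2.2
  · exact h1 _ _ h.1 h.2.1 h.2.2
  · exact h.2.2 (h2 _ _ (φ.injective.ne hij) h.1 h.2.1)

/-- The lower bound construction: the vertices `≥ x` are independent, the vertices `< j` are
independent, the vertices in `[j, x)` form a clique joined to all vertices `< j`, and the `k` edges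
between the two sides of the cut at `x` are arbitrary. -/
lemma card_C5Free_ge (n x j k : ℕ) (hx : x ≤ n) (hj : j ≤ x) :
    (x * (n - x)).choose k ≤ #(C5Free n (x.choose 2 - j.choose 2 + k)) := by
  let I : ℕ → Finset (Fin n) := fun k => univ.filter fun v => v.val < k
  have hI : ∀ k ≤ n, #(I k) = k := fun k hk => by
    simp only [I]
    rw [Fin.card_filter_val_lt]
    omega
  have hIm : ∀ k v, v ∈ I k ↔ v.val < k := fun k v => by simp [I]
  -- `Q k` is the set of pairs inside `{0, …, k - 1}`, `X` the set of pairs across the cut at `x`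
  let Q : ℕ → Finset (Sym2 (Fin n)) := fun k => (I k).offDiag.image Sym2.mk.uncurry
  have hQ : ∀ k ≤ n, #(Q k) = k.choose 2 := fun k hk => by
    rw [Sym2.card_image_offDiag, hI k hk]
  have hQm : ∀ k u v, s(u, v) ∈ Q k ↔ u.val < k ∧ v.val < k ∧ u ≠ v := by
    intro k u v
    simp only [Q, mem_image, mem_offDiag, hIm, Prod.exists, Function.uncurry_apply_pair,
      Sym2.eq_iff]
    constructor
    · rintro ⟨a, b, ⟨h1, h2, h3⟩, ⟨rfl, rfl⟩ | ⟨rfl, rfl⟩⟩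
      exacts [⟨h1, h2, h3⟩, ⟨h2, h1, h3.symm⟩]
    · exact fun h => ⟨u, v, h, .inl ⟨rfl, rfl⟩⟩
  let X : Finset (Sym2 (Fin n)) := (I x ×ˢ (I x)ᶜ).image Sym2.mk.uncurry
  have hXm : ∀ u v, s(u, v) ∈ X ↔ (u.val < x ∧ x ≤ v.val) ∨ (v.val < x ∧ x ≤ u.val) := by
    intro u v
    simp only [X, mem_image, mem_product, mem_compl, hIm, Prod.exists, Function.uncurry_apply_pair,
      Sym2.eq_iff, not_lt]
    constructor
    · rintro ⟨a, b, ⟨h1, h2⟩, ⟨rfl, rfl⟩ | ⟨rfl, rfl⟩⟩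
      exacts [.inl ⟨h1, h2⟩, .inr ⟨h1, h2⟩]
    · rintro (h | h)
      exacts [⟨u, v, h, .inl ⟨rfl, rfl⟩⟩, ⟨v, u, h, .inr ⟨rfl, rfl⟩⟩]
  have hX : #X = x * (n - x) := by
    rw [card_image_of_injOn, card_product, card_compl, hI x hx, Fintype.card_fin]
    rintro ⟨a, b⟩ h ⟨a', b'⟩ h' e
    simp only [coe_product, Set.mem_prod, mem_coe, mem_compl, hIm] at h h'
    simp only [Function.uncurry_apply_pair, Sym2.eq_iff] at e
    rcases e with ⟨rfl, rfl⟩ | ⟨rfl, rfl⟩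
    · rfl
    · omega
  let D : Finset (Sym2 (Fin n)) := Q x \ Q j
  have hQsub : Q j ⊆ Q x := by
    intro e
    induction e with | _ u v
    rw [hQm, hQm]
    exact fun h => ⟨by omega, by omega, h.2.2⟩
  have hD : #D = x.choose 2 - j.choose 2 := by
    rw [card_sdiff_of_subset hQsub, hQ x hx, hQ j (hj.trans hx)]
  have hDX : Disjoint D X := by
    rw [Finset.disjoint_left]
    intro e
    induction e with | _ u v
    simp only [D, mem_sdiff, hQm, hXm]
    omega
  have hDm : ∀ u v, s(u, v) ∈ D ↔ (u.val < x ∧ v.val < x ∧ u ≠ v) ∧ ¬ (u.val < j ∧ v.val < j) := by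
    intro u v
    simp only [D, mem_sdiff, hQm]
    tauto
  have hedge : ∀ T ⊆ X, (fromEdgeSet ((D ∪ T : Finset (Sym2 (Fin n))) : Set (Sym2 (Fin n)))).edgeSet
      = ((D ∪ T : Finset (Sym2 (Fin n))) : Set (Sym2 (Fin n))) := by
    intro T hT
    rw [edgeSet_fromEdgeSet, sdiff_eq_left, Set.disjoint_left]
    intro e
    induction e with | _ u v
    rw [mem_coe, mem_union]
    rintro h (rfl : u = v)
    rcases h with h | h
    · rw [hDm] at h; exact h.1.2.2 rfl
    · have := hT h
      rw [hXm] at this; omega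
  rw [← hX, ← card_powersetCard]
  refine card_le_card_of_injOn
    (fun T => fromEdgeSet ((D ∪ T : Finset (Sym2 (Fin n))) : Set (Sym2 (Fin n)))) ?_ ?_
  · intro T hT
    obtain ⟨hTX, hTk⟩ := mem_powersetCard.1 (mem_coe.1 hT)
    rw [mem_coe, C5Free, mem_filter]
    refine ⟨mem_univ _, ?_, ?_⟩
    · refine not_hasInducedC5_of_coloring _
        (fun v => if x ≤ v.val then 0 else if v.val < j then 1 else 2) ?_ ?_ ?_
      · intro u v hu hv h
        have hu' : x ≤ u.val := by
          by_contra h'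
          simp only [h', if_false] at hu
          split_ifs at hu <;> simp at hu
        have hv' : x ≤ v.val := by
          by_contra h'
          simp only [h', if_false] at hv
          split_ifs at hv <;> simp at hv
        rw [fromEdgeSet_adj, mem_coe, mem_union, hDm] at h
        rcases h.1 with h | h
        · omega
        · have := hTX h
          rw [hXm] at this; omega
      · intro u v hu hv h
        have hu' : u.val < x ∧ u.val < j := by split_ifs at hu <;> omega
        have hv' : v.val < x ∧ v.val < j := by split_ifs at hv <;> omega
        rw [fromEdgeSet_adj, mem_coe, mem_union, hDm] at h
        rcases h.1 with h | h
        · omega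
        · have := hTX h
          rw [hXm] at this; omega
      · intro u v huv hu hv
        have hu' : u.val < x ∧ ¬ u.val < j := by
          split_ifs at hu with h1 h2
          · simp at hu
          · simp at hu
          · exact ⟨by omega, h2⟩
        have hv' : v.val < x := by
          by_contra h'
          exact hv (if_pos (by omega))
        rw [fromEdgeSet_adj, mem_coe, mem_union, hDm]
        exact ⟨.inl ⟨⟨hu'.1, hv', huv⟩, fun h => hu'.2 h.1⟩, huv⟩
    · rw [edgeCount, hedge T hTX, Nat.card_coe_set_eq, Set.ncard_coe_finset]
      rw [card_union_of_disjoint (hDX.mono_right hTX), hD, hTk]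
  · intro T hT T' hT' h
    obtain ⟨hTX, -⟩ := mem_powersetCard.1 (mem_coe.1 hT)
    obtain ⟨hTX', -⟩ := mem_powersetCard.1 (mem_coe.1 hT')
    have h1 := congrArg SimpleGraph.edgeSet h
    simp only at h1
    rw [hedge T hTX, hedge T' hTX', coe_inj] at h1
    have h2 : ∀ T ⊆ X, (D ∪ T) \ D = T := fun T hT => by
      rw [union_sdiff_left, sdiff_eq_self_of_disjoint (hDX.mono_right hT).symm]
    rw [← h2 T hTX, h1, h2 _ hTX']

/-- The 5-cycle is self-complementary, through multiplication by `3` on `ℤ/5`. -/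
lemma hasInducedC5_compl {V : Type} {G : SimpleGraph V} (h : HasInducedC5 G) : HasInducedC5 Gᶜ := by
  obtain ⟨φ⟩ := h
  refine ⟨⟨⟨fun i => φ (3 * i), ?_⟩, ?_⟩⟩
  · exact φ.injective.comp (by decide)
  · intro i j
    have h3 : ∀ i j : Fin 5, (¬ 3 * i = 3 * j ∧ ¬ (3 * i - 3 * j = 1 ∨ 3 * j - 3 * i = 1)) ↔
      (i - j = 1 ∨ j - i = 1) := by decide
    simp only [Function.Embedding.coeFn_mk, compl_adj, φ.map_rel_iff, cycleGraph_adj]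
    rw [← h3 i j, ne_eq, φ.injective.eq_iff]

lemma card_C5Free_compl (n m : ℕ) (hm : m ≤ n.choose 2) :
    #(C5Free n m) = #(C5Free n (n.choose 2 - m)) := by
  have hle : ∀ m ≤ n.choose 2, #(C5Free n m) ≤ #(C5Free n (n.choose 2 - m)) := by
    intro m hm
    refine card_le_card_of_injOn compl ?_ (compl_injective.injOn)
    intro G hG
    rw [mem_coe, C5Free, mem_filter] at hG ⊢
    refine ⟨mem_univ _, fun h => hG.2.1 (by simpa using hasInducedC5_compl h), ?_⟩
    have h1 := hG.2.2
    have h2 : edgeCount (⊤ : SimpleGraph (Fin n)) = n.choose 2 := by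
      have h := card_edgeFinset_top_eq_card_choose_two (V := Fin n)
      rw [Fintype.card_fin] at h
      rw [← h, edgeCount_eq]
      congr!
    have h3 : (⊤ : SimpleGraph (Fin n)).edgeSet = G.edgeSet ∪ Gᶜ.edgeSet := by
      rw [← edgeSet_sup, sup_compl_eq_top]
    have h4 : Disjoint G.edgeSet Gᶜ.edgeSet := disjoint_edgeSet.2 disjoint_compl_right
    rw [edgeCount, Nat.card_coe_set_eq] at h1 h2 ⊢
    rw [h3, Set.ncard_union_eq h4] at h2
    omega
  refine (hle m hm).antisymm ?_
  have := hle (n.choose 2 - m) (Nat.sub_le _ _)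
  rwa [Nat.sub_sub_self hm] at this

/-! ### Asymptotics -/

/-- The term of index `k` is the largest in the binomial expansion of `(k + (M - k)) ^ M`. -/
lemma pow_self_le (M k : ℕ) (hk : k < M) (hk0 : 0 < k) :
    M ^ M ≤ (M + 1) * (M.choose k * (k ^ k * (M - k) ^ (M - k))) := by
  obtain ⟨l, rfl⟩ := Nat.exists_eq_add_of_lt hk
  set l' := l + 1 with hl
  have hM : k + l + 1 = k + l' := by omega
  rw [hM] at hk ⊢
  have hkl : k + l' - k = l' := by omega
  rw [hkl]
  let t : ℕ → ℕ := fun i => (k + l').choose i * (k ^ i * l' ^ (k + l' - i))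
  -- the ratio of consecutive terms
  have hstep : ∀ i < k + l', t (i + 1) * ((i + 1) * l') = t i * ((k + l' - i) * k) := by
    intro i hi
    have h1 := Nat.choose_succ_right_eq (k + l') i
    have h2 : k + l' - i = (k + l' - (i + 1)) + 1 := by omega
    simp only [t]
    calc _ = ((k + l').choose (i + 1) * (i + 1)) * (k ^ (i + 1) * (l' ^ (k + l' - (i + 1)) * l')) := by
          ring
      _ = ((k + l').choose i * (k + l' - i)) * (k ^ (i + 1) * l' ^ (k + l' - i)) := by
          rw [h1, ← pow_succ, ← h2]
      _ = _ := by ring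
  have hup : ∀ i < k, t i ≤ t (i + 1) := by
    intro i hi
    have h := hstep i (by omega)
    refine Nat.le_of_mul_le_mul_right (c := (i + 1) * l') ?_ (by positivity)
    rw [h]
    refine Nat.mul_le_mul_left _ ?_
    obtain ⟨d, rfl⟩ := Nat.exists_eq_add_of_lt hi
    have : i + d + 1 + l' - i = d + 1 + l' := by omega
    rw [this]
    nlinarith
  have hdown : ∀ i, k ≤ i → i < k + l' → t (i + 1) ≤ t i := by
    intro i hi hi'
    have h := hstep i (by omega)
    refine Nat.le_of_mul_le_mul_right (c := (i + 1) * l') ?_ (by positivity)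
    rw [h]
    refine Nat.mul_le_mul_left _ ?_
    have h3 : k + l' - i ≤ l' := by omega
    have h4 : k ≤ i + 1 := by omega
    nlinarith [Nat.mul_le_mul h3 h4]
  have hmax : ∀ i ≤ k + l', t i ≤ t k := by
    intro i hi
    rcases le_total i k with h | h
    · refine Nat.decreasingInduction' (P := fun i => t i ≤ t k) (m := i) (n := k) ?_ h le_rfl
      intro j hj _ ih
      exact (hup j hj).trans ih
    · induction i, h using Nat.le_induction with
      | base => exact le_rfl
      | succ i hi' ih => exact (hdown i hi' (by omega)).trans (ih (by omega))
  calc (k + l') ^ (k + l') = ∑ i ∈ range (k + l' + 1), t i := by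
        conv_lhs => rw [add_pow k l' (k + l')]
        refine sum_congr rfl fun i _ => ?_
        simp only [t]; push_cast; ring
    _ ≤ ∑ i ∈ range (k + l' + 1), t k := by
        refine sum_le_sum fun i hi => hmax i ?_
        rw [mem_range] at hi; omega
    _ = _ := by simp [t]

lemma binEnt_eq (x : ℝ) : binEnt x = Real.binEntropy x / Real.log 2 := by
  rw [binEnt, Real.binEntropy, Real.logb, Real.logb, Real.log_inv, Real.log_inv]
  ring

lemma continuous_binEnt : Continuous binEnt := by
  have : binEnt = fun x => Real.binEntropy x / Real.log 2 := funext binEnt_eq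
  rw [this]
  exact Real.binEntropy_continuous.div_const _

lemma binEnt_half : binEnt (1 / 2) = 1 := by
  rw [binEnt_eq]
  have : Real.log 2 ≠ 0 := (Real.log_pos (by norm_num)).ne'
  rw [one_div, Real.binEntropy_two_inv, div_self this]

lemma binEnt_le_logb_choose (M k : ℕ) (hk : k < M) (hk0 : 0 < k) :
    M * binEnt (k / M) - Real.logb 2 (M + 1) ≤ Real.logb 2 (M.choose k) := by
  have h := pow_self_le M k hk hk0
  have hR : (M : ℝ) ^ M ≤ (M + 1) * (M.choose k * (k ^ k * ((M : ℝ) - k) ^ (M - k))) := by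
    have : ((M ^ M : ℕ) : ℝ) ≤ ((M + 1) * (M.choose k * (k ^ k * (M - k) ^ (M - k))) : ℕ) := by
      exact_mod_cast h
    push_cast [Nat.cast_sub hk.le] at this
    exact this
  have hk0' : (0 : ℝ) < k := by exact_mod_cast hk0
  have hkM : (k : ℝ) < M := by exact_mod_cast hk
  have hM : (0 : ℝ) < M := hk0'.trans hkM
  have hl : (0 : ℝ) < (M : ℝ) - k := by linarith
  have hC : (0 : ℝ) < M.choose k := by exact_mod_cast Nat.choose_pos hk.le
  have h2 := Real.logb_le_logb_of_le (b := 2) (by norm_num) (by positivity) hR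
  rw [Real.logb_pow, Real.logb_mul (by positivity) (by positivity),
    Real.logb_mul hC.ne' (by positivity), Real.logb_mul (by positivity) (by positivity),
    Real.logb_pow, Real.logb_pow, Nat.cast_sub hk.le] at h2
  have h3 : (M : ℝ) * binEnt (k / M) = M * Real.logb 2 M - k * Real.logb 2 k
      - (M - k) * Real.logb 2 (M - k) := by
    have h4 : 1 - (k : ℝ) / M = (M - k) / M := by field_simp
    rw [binEnt, h4, Real.logb_div hk0'.ne' hM.ne', Real.logb_div hl.ne' hM.ne']
    field_simp
    ring
  rw [h3]
  linarith

open Filter Topology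

lemma tendsto_sq_div_choose : Tendsto (fun n : ℕ => (n : ℝ) ^ 2 / (n.choose 2 : ℝ)) atTop (𝓝 2) := by
  have h1 : Tendsto (fun n : ℕ => (1 : ℝ) / n) atTop (𝓝 0) := tendsto_one_div_atTop_nhds_zero_nat
  have h2 : Tendsto (fun n : ℕ => 2 / (1 - (1 : ℝ) / n)) atTop (𝓝 (2 / (1 - 0))) :=
    tendsto_const_nhds.div (tendsto_const_nhds.sub h1) (by norm_num)
  rw [sub_zero, div_one] at h2
  refine h2.congr' ?_
  filter_upwards [eventually_ge_atTop 2] with n hn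
  have hn' : (2 : ℝ) ≤ n := by exact_mod_cast hn
  have : (n : ℝ) - 1 ≠ 0 := by linarith
  rw [Nat.cast_choose_two]
  field_simp

/-- Passing from the normalisation by `n²` to that by `n.choose 2`. -/
lemma tendsto_div_choose {f : ℕ → ℝ} {a : ℝ}
    (hf : Tendsto (fun n : ℕ => f n / (n : ℝ) ^ 2) atTop (𝓝 a)) :
    Tendsto (fun n : ℕ => f n / (n.choose 2 : ℝ)) atTop (𝓝 (2 * a)) := by
  have := hf.mul tendsto_sq_div_choose
  rw [mul_comm] at this
  refine this.congr' ?_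
  filter_upwards [eventually_gt_atTop 0] with n hn
  have hn' : (n : ℝ) ≠ 0 := by positivity
  field_simp

lemma tendsto_choose_two_div {u : ℕ → ℕ} {a : ℝ}
    (hu : Tendsto (fun n : ℕ => (u n : ℝ) / n) atTop (𝓝 a)) :
    Tendsto (fun n : ℕ => ((u n).choose 2 : ℝ) / (n : ℝ) ^ 2) atTop (𝓝 (a ^ 2 / 2)) := by
  have h1 : Tendsto (fun n : ℕ => (1 : ℝ) / n) atTop (𝓝 0) := tendsto_one_div_atTop_nhds_zero_nat
  have h2 := (hu.mul (hu.sub h1)).div_const 2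
  have : a * (a - 0) / 2 = a ^ 2 / 2 := by ring
  rw [this] at h2
  refine h2.congr' ?_
  filter_upwards [eventually_gt_atTop 0] with n hn
  have hn' : (n : ℝ) ≠ 0 := by positivity
  rw [Nat.cast_choose_two]
  field_simp

lemma tendsto_floor_div {a : ℝ} (ha : 0 ≤ a) :
    Tendsto (fun n : ℕ => (⌊a * (n : ℝ)⌋₊ : ℝ) / n) atTop (𝓝 a) :=
  (tendsto_nat_floor_mul_div_atTop ha).comp tendsto_natCast_atTop_atTop

/-- The lower bound: `card_C5Free_ge` with `x ≈ n / 2`, and `j` chosen so that the number `k` of crossing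
edges is about `min c (1/4)` times `n.choose 2`. -/
lemma exists_lower_seq {c : ℝ} (hc0 : 0 < c) (hc : c ≤ 1 / 2) {m : ℕ → ℕ}
    (hm : Tendsto (fun n : ℕ => (m n : ℝ) / (n.choose 2 : ℝ)) atTop (𝓝 c)) :
    ∃ L : ℕ → ℝ, Tendsto L atTop (𝓝 (binEnt (2 * min c (1 / 4)) / 2)) ∧
      ∀ᶠ n : ℕ in atTop, 0 < #(C5Free n (m n)) ∧
        L n ≤ Real.logb 2 (#(C5Free n (m n))) / (n.choose 2 : ℝ) := by
  have hmax : max c (1 / 4) ≤ 1 / 2 := max_le hc (by norm_num)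
  have hmin0 : 0 < min c (1 / 4) := lt_min hc0 (by norm_num)
  have hmin1 : min c (1 / 4) ≤ 1 / 4 := min_le_right _ _
  set s : ℝ := √(1 / 2 - max c (1 / 4)) with hs
  have hs0 : 0 ≤ s := Real.sqrt_nonneg _
  have hs2 : s ^ 2 = 1 / 2 - max c (1 / 4) := Real.sq_sqrt (by linarith)
  have hs1 : s ≤ 1 / 2 := by
    rw [hs, Real.sqrt_le_left (by norm_num)]
    have := le_max_right c (1 / 4)
    linarith
  let x : ℕ → ℕ := fun n => ⌊(1 / 2 : ℝ) * (n : ℝ)⌋₊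
  let j : ℕ → ℕ := fun n => ⌊s * (n : ℝ)⌋₊
  let M : ℕ → ℕ := fun n => x n * (n - x n)
  let b : ℕ → ℕ := fun n => (x n).choose 2 - (j n).choose 2
  -- `r n` is the number of crossing edges that remain to be placed, as a real number
  let r : ℕ → ℝ := fun n => m n - ((x n).choose 2 - (j n).choose 2)
  have hxn : ∀ n, x n ≤ n := fun n => by
    refine Nat.floor_le_of_le ?_
    have : (0 : ℝ) ≤ n := Nat.cast_nonneg n
    linarith
  have hjx : ∀ n, j n ≤ x n := fun n => Nat.floor_le_floor (by gcongr)
  have hxl : Tendsto (fun n : ℕ => (x n : ℝ) / n) atTop (𝓝 (1 / 2)) := tendsto_floor_div (by norm_num)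
  have hjl : Tendsto (fun n : ℕ => (j n : ℝ) / n) atTop (𝓝 s) := tendsto_floor_div hs0
  have hMl : Tendsto (fun n : ℕ => (M n : ℝ) / (n.choose 2 : ℝ)) atTop (𝓝 (1 / 2)) := by
    have h : Tendsto (fun n : ℕ => (M n : ℝ) / (n : ℝ) ^ 2) atTop (𝓝 (1 / 2 * (1 - 1 / 2))) := by
      refine (hxl.mul (tendsto_const_nhds.sub hxl)).congr' ?_
      filter_upwards [eventually_gt_atTop 0] with n hn
      have hn' : (n : ℝ) ≠ 0 := by positivity
      simp only [M]
      rw [Nat.cast_mul, Nat.cast_sub (hxn n)]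
      field_simp
    convert tendsto_div_choose h using 2
    norm_num
  have hrl : Tendsto (fun n : ℕ => r n / (n.choose 2 : ℝ)) atTop (𝓝 (min c (1 / 4))) := by
    have h := hm.sub ((tendsto_div_choose (tendsto_choose_two_div hxl)).sub
      (tendsto_div_choose (tendsto_choose_two_div hjl)))
    have e : c - (2 * ((1 / 2) ^ 2 / 2) - 2 * (s ^ 2 / 2)) = min c (1 / 4) := by
      have := min_add_max c (1 / 4)
      rw [hs2]
      linarith
    rw [e] at h
    refine h.congr fun n => ?_
    simp only [r]
    ring
  have hlin : Tendsto (fun n : ℕ => (2 * n : ℝ) / (n.choose 2 : ℝ)) atTop (𝓝 0) := by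
    have h1 : Tendsto (fun n : ℕ => (1 : ℝ) / n) atTop (𝓝 0) := tendsto_one_div_atTop_nhds_zero_nat
    have h : Tendsto (fun n : ℕ => (2 * n : ℝ) / (n : ℝ) ^ 2) atTop (𝓝 (2 * 0)) := by
      refine (h1.const_mul 2).congr' ?_
      filter_upwards [eventually_gt_atTop 0] with n hn
      have hn' : (n : ℝ) ≠ 0 := by positivity
      field_simp
    convert tendsto_div_choose h using 2
    norm_num
  have hratio : Tendsto (fun n : ℕ => r n / M n) atTop (𝓝 (2 * min c (1 / 4))) := by
    have h := hrl.div hMl (by norm_num)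
    have e : min c (1 / 4) / (1 / 2) = 2 * min c (1 / 4) := by ring
    rw [e] at h
    refine h.congr' ?_
    filter_upwards [eventually_ge_atTop 2] with n hn
    have hN : (0 : ℝ) < n.choose 2 := by exact_mod_cast Nat.choose_pos hn
    simp only [Pi.div_apply]
    rw [div_div_div_cancel_right₀ hN.ne']
  refine ⟨fun n => M n / (n.choose 2 : ℝ) * binEnt (r n / M n) - 2 * n / (n.choose 2 : ℝ), ?_, ?_⟩
  · have h := (hMl.mul ((continuous_binEnt.tendsto _).comp hratio)).sub hlin
    have e : 1 / 2 * binEnt (2 * min c (1 / 4)) - 0 = binEnt (2 * min c (1 / 4)) / 2 := by ring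
    rw [e] at h
    exact h
  · have hMr : Tendsto (fun n : ℕ => M n / (n.choose 2 : ℝ) - r n / (n.choose 2 : ℝ)) atTop
        (𝓝 (1 / 2 - min c (1 / 4))) := hMl.sub hrl
    filter_upwards [eventually_ge_atTop 2, hrl.eventually_const_lt hmin0,
      hMr.eventually_const_lt (u := 0) (by linarith)] with n hn h1 h2
    have hN : (0 : ℝ) < n.choose 2 := by exact_mod_cast Nat.choose_pos hn
    have hr0 : 0 < r n := by
      have := mul_pos h1 hN
      rwa [div_mul_cancel₀ _ hN.ne'] at this
    have hrM : r n < M n := by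
      rw [← sub_div] at h2
      have := mul_pos h2 hN
      rw [div_mul_cancel₀ _ hN.ne'] at this
      linarith
    have hjc : (j n).choose 2 ≤ (x n).choose 2 := Nat.choose_le_choose 2 (hjx n)
    have hb : ((b n : ℕ) : ℝ) = (x n).choose 2 - (j n).choose 2 := by
      simp only [b]; rw [Nat.cast_sub hjc]
    have hbm : b n ≤ m n := by
      have : (b n : ℝ) ≤ m n := by rw [hb]; simp only [r] at hr0; linarith
      exact_mod_cast this
    have hk : ((m n - b n : ℕ) : ℝ) = r n := by rw [Nat.cast_sub hbm, hb]
    have hk0 : 0 < m n - b n := by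
      have : (0 : ℝ) < (m n - b n : ℕ) := by rw [hk]; exact hr0
      exact_mod_cast this
    have hkM : m n - b n < M n := by
      have : ((m n - b n : ℕ) : ℝ) < M n := by rw [hk]; exact hrM
      exact_mod_cast this
    have hge := card_C5Free_ge n (x n) (j n) (m n - b n) (hxn n) (hjx n)
    have hbe : (x n).choose 2 - (j n).choose 2 + (m n - b n) = m n := by
      simp only [b] at hbm ⊢; omega
    rw [hbe] at hge
    have hcp : 0 < (M n).choose (m n - b n) := Nat.choose_pos hkM.le
    refine ⟨hcp.trans_le hge, ?_⟩
    have h3 := binEnt_le_logb_choose (M n) (m n - b n) hkM hk0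
    rw [hk] at h3
    have h4 : Real.logb 2 ((M n).choose (m n - b n)) ≤ Real.logb 2 (#(C5Free n (m n))) :=
      Real.logb_le_logb_of_le (by norm_num) (by exact_mod_cast hcp) (by exact_mod_cast hge)
    have h5 : Real.logb 2 (M n + 1) ≤ 2 * n := by
      rw [Real.logb_le_iff_le_rpow (by norm_num) (by positivity)]
      have e1 : M n ≤ n * n := Nat.mul_le_mul (hxn n) (Nat.sub_le _ _)
      have e2 : n + 1 ≤ 2 ^ n := Nat.lt_two_pow_self
      have e3 : M n + 1 ≤ 2 ^ (2 * n) := by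
        rw [two_mul, pow_add]
        nlinarith [Nat.mul_le_mul e2 e2]
      have e4 : ((M n + 1 : ℕ) : ℝ) ≤ (2 ^ (2 * n) : ℕ) := by exact_mod_cast e3
      push_cast at e4
      rw [show (2 : ℝ) * n = ((2 * n : ℕ) : ℝ) by push_cast; ring, Real.rpow_natCast]
      exact e4
    rw [div_mul_eq_mul_div, ← sub_div]
    gcongr
    linarith

/-- The upper bound, from `card_C5Free_le` with the optimal weight `x = 2κ / (1 - 2κ)`, where
`κ = min c (1/4)`, and with `y` and `ε` small enough for their contribution to be below `η`. -/
lemma eventually_upper {c : ℝ} (hc0 : 0 < c) {m : ℕ → ℕ}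
    (hm : Tendsto (fun n : ℕ => (m n : ℝ) / (n.choose 2 : ℝ)) atTop (𝓝 c)) {η : ℝ} (hη : 0 < η) :
    ∀ᶠ n : ℕ in atTop, 0 < #(C5Free n (m n)) →
      Real.logb 2 (#(C5Free n (m n))) / (n.choose 2 : ℝ) < binEnt (2 * min c (1 / 4)) / 2 + η := by
  set κ := min c (1 / 4) with hκ
  have hκ0 : 0 < κ := lt_min hc0 (by norm_num)
  have hκ1 : κ ≤ 1 / 4 := min_le_right _ _
  set x : ℝ := 2 * κ / (1 - 2 * κ) with hx
  have hd : 0 < 1 - 2 * κ := by linarith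
  have hx0 : 0 < x := by positivity
  have hx1 : x ≤ 1 := by rw [hx, div_le_one hd]; linarith
  set y : ℝ := min 1 (η / 16) with hy
  have hy0 : 0 < y := lt_min one_pos (by positivity)
  have hy1 : y ≤ 1 := min_le_left _ _
  have hly : Real.logb 2 y ≤ 0 := Real.logb_nonpos (by norm_num) hy0.le hy1
  have hl1y : 2 * Real.logb 2 (1 + y) ≤ η / 4 := by
    have h1 : Real.log (1 + y) ≤ y := by
      have := Real.log_le_sub_one_of_pos (show 0 < 1 + y by linarith)
      linarith
    have h2 : 1 / 2 < Real.log 2 := by have := Real.log_two_gt_d9; linarith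
    have h3 : Real.logb 2 (1 + y) ≤ 2 * y := by
      rw [Real.logb, div_le_iff₀ (by linarith)]
      nlinarith
    have h4 : y ≤ η / 16 := min_le_right _ _
    linarith
  set ε : ℝ := min 1 (η / (8 * (1 - Real.logb 2 y))) with hε
  have hdy : 0 < 1 - Real.logb 2 y := by linarith
  have hε0 : 0 < ε := lt_min one_pos (by positivity)
  have hε1 : ε ≤ 1 := min_le_left _ _
  have hεy : 2 * (ε * -Real.logb 2 y) ≤ η / 4 := by
    have h1 : ε ≤ η / (8 * (1 - Real.logb 2 y)) := min_le_right _ _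
    rw [le_div_iff₀ (by positivity)] at h1
    nlinarith
  obtain ⟨K, n₀, hK, hcard⟩ := card_C5Free_le ε hε0 hε1
  let U : ℕ → ℝ := fun n => (m n : ℝ) / (n.choose 2 : ℝ) * -Real.logb 2 x +
    (n * Real.logb 2 K + K * K + (n : ℝ) ^ 2 * (ε * -Real.logb 2 y + Real.logb 2 (1 + x) / 4 +
      Real.logb 2 (1 + y))) / (n.choose 2 : ℝ)
  have hU : Tendsto U atTop (𝓝 (c * -Real.logb 2 x + 2 * (ε * -Real.logb 2 y +
      Real.logb 2 (1 + x) / 4 + Real.logb 2 (1 + y)))) := by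
    refine (hm.mul_const _).add (tendsto_div_choose ?_)
    have h1 : Tendsto (fun n : ℕ => (1 : ℝ) / n) atTop (𝓝 0) := tendsto_one_div_atTop_nhds_zero_nat
    have h2 := ((h1.mul_const (Real.logb 2 K)).add ((h1.mul h1).mul_const (K * K : ℝ))).add_const
      (ε * -Real.logb 2 y + Real.logb 2 (1 + x) / 4 + Real.logb 2 (1 + y))
    simp only [zero_mul, zero_add, mul_zero] at h2
    refine h2.congr' ?_
    filter_upwards [eventually_gt_atTop 0] with n hn
    have hn' : (n : ℝ) ≠ 0 := by positivity
    field_simp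
  have hval : c * -Real.logb 2 x + Real.logb 2 (1 + x) / 2 = binEnt (2 * κ) / 2 := by
    have h1 : 1 + x = 1 / (1 - 2 * κ) := by rw [hx]; field_simp; ring
    have h2 : c * Real.logb 2 x = κ * Real.logb 2 x := by
      rcases le_total c (1 / 4) with h | h
      · rw [hκ, min_eq_left h]
      · have : x = 1 := by rw [hx, hκ, min_eq_right h]; norm_num
        rw [this, Real.logb_one]; ring
    rw [mul_neg, h2, h1, hx, binEnt, Real.logb_div (by positivity) hd.ne',
      Real.logb_div one_ne_zero hd.ne', Real.logb_one]
    ring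
  have hlim : c * -Real.logb 2 x + 2 * (ε * -Real.logb 2 y +
      Real.logb 2 (1 + x) / 4 + Real.logb 2 (1 + y)) < binEnt (2 * κ) / 2 + η := by
    linarith
  filter_upwards [hU.eventually_lt_const hlim, eventually_ge_atTop n₀, eventually_ge_atTop 2]
    with n h1 h2 hn hpos
  refine lt_of_le_of_lt ?_ h1
  have hN : (0 : ℝ) < n.choose 2 := by exact_mod_cast Nat.choose_pos hn
  have hpos' : (0 : ℝ) < #(C5Free n (m n)) := by exact_mod_cast hpos
  have hK' : (0 : ℝ) < K := by exact_mod_cast hK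
  have h3 := Real.logb_le_logb_of_le (b := 2) (by norm_num) (by positivity)
    (hcard n h2 (m n) x y hx0 hx1 hy0 hy1)
  have h22 : Real.logb 2 2 = 1 := Real.logb_self_eq_one (by norm_num)
  rw [Real.logb_mul hpos'.ne' (by positivity), Real.logb_mul (by positivity) (by positivity),
    Real.logb_mul (by positivity) (by positivity), Real.logb_mul (by positivity) (by positivity),
    Real.logb_mul (by positivity) (by positivity), Real.logb_pow, Real.logb_pow, Real.logb_pow,
    Real.logb_pow, Real.logb_pow, Real.logb_pow, h22] at h3
  push_cast at h3
  have h4 : (⌊ε * (n : ℝ) ^ 2⌋₊ : ℝ) ≤ ε * (n : ℝ) ^ 2 := Nat.floor_le (by positivity)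
  have h5 : ((n ^ 2 / 4 : ℕ) : ℝ) ≤ (n : ℝ) ^ 2 / 4 := by
    have := Nat.cast_div_le (α := ℝ) (m := n ^ 2) (n := 4)
    push_cast at this
    exact this
  have h6 : 0 ≤ Real.logb 2 (1 + x) := Real.logb_nonneg (by norm_num) (by linarith)
  have h7 := mul_le_mul_of_nonneg_right h4 (neg_nonneg.2 hly)
  have h8 := mul_le_mul_of_nonneg_right h5 h6
  simp only [U]
  rw [div_mul_eq_mul_div, ← add_div]
  gcongr
  linarith

/-- The limit for densities at most `1/2`; larger densities reduce to this by complementation. -/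
lemma tendsto_C5Free {c : ℝ} (hc0 : 0 < c) (hc : c ≤ 1 / 2) {m : ℕ → ℕ}
    (hm : Tendsto (fun n : ℕ => (m n : ℝ) / (n.choose 2 : ℝ)) atTop (𝓝 c)) :
    Tendsto (fun n : ℕ => Real.logb 2 (#(C5Free n (m n))) / (n.choose 2 : ℝ)) atTop
      (𝓝 (binEnt (2 * min c (1 / 4)) / 2)) := by
  obtain ⟨L, hL, hlow⟩ := exists_lower_seq hc0 hc hm
  rw [tendsto_order]
  constructor
  · intro a ha
    filter_upwards [hL.eventually_const_lt ha, hlow] with n h1 h2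
    exact h1.trans_le h2.2
  · intro a ha
    filter_upwards [hlow, eventually_upper hc0 hm (sub_pos.2 ha)] with n h1 h2
    have := h2 h1.1
    linarith

/-- For every `0 < c < 1`, `log₂|𝒞(n,c)| / C(n,2)` converges to `h(c)` as `n → ∞`. -/
theorem stmt0 (c : ℝ) (hc0 : 0 < c) (hc1 : c < 1) :
    Filter.Tendsto (fun n : ℕ => Real.logb 2 ((Cset n c).card : ℝ) / (n.choose 2 : ℝ))
      Filter.atTop (nhds (hfun c)) := by
  have hN : Tendsto (fun n : ℕ => (n.choose 2 : ℝ)) atTop atTop := by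
    refine tendsto_atTop_mono' atTop ?_ (tendsto_natCast_atTop_atTop (R := ℝ) |>.atTop_div_const
      (show (0 : ℝ) < 2 by norm_num))
    filter_upwards [eventually_ge_atTop 2] with n hn
    have hn' : (2 : ℝ) ≤ n := by exact_mod_cast hn
    rw [Nat.cast_choose_two]
    nlinarith
  have hfl : Tendsto (fun n : ℕ => (⌊c * (n.choose 2 : ℝ)⌋₊ : ℝ) / (n.choose 2 : ℝ)) atTop (𝓝 c) :=
    (tendsto_nat_floor_mul_div_atTop hc0.le).comp hN
  rcases le_or_gt c (1 / 2) with hc | hc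
  · have h := tendsto_C5Free hc0 hc hfl
    have e : binEnt (2 * min c (1 / 4)) / 2 = hfun c := by
      rw [hfun]
      split_ifs with h1 h2
      · rw [min_eq_left h1.le]
      · rw [min_eq_right (not_lt.1 h1), show (2 : ℝ) * (1 / 4) = 1 / 2 by norm_num, binEnt_half]
      · linarith
    rw [e] at h
    exact h
  · have hle : ∀ n : ℕ, ⌊c * (n.choose 2 : ℝ)⌋₊ ≤ n.choose 2 := fun n =>
      Nat.floor_le_of_le (mul_le_of_le_one_left (Nat.cast_nonneg _) hc1.le)
    have hfl' : Tendsto (fun n : ℕ => ((n.choose 2 - ⌊c * (n.choose 2 : ℝ)⌋₊ : ℕ) : ℝ) /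
        (n.choose 2 : ℝ)) atTop (𝓝 (1 - c)) := by
      refine (hfl.const_sub 1).congr' ?_
      filter_upwards [eventually_ge_atTop 2] with n hn
      have hN : (0 : ℝ) < n.choose 2 := by exact_mod_cast Nat.choose_pos hn
      rw [Nat.cast_sub (hle n), sub_div, div_self hN.ne']
    have h := tendsto_C5Free (by linarith) (by linarith) hfl'
    have e : binEnt (2 * min (1 - c) (1 / 4)) / 2 = hfun c := by
      rw [hfun]
      split_ifs with h1 h2
      · linarith
      · rw [min_eq_right (by linarith), show (2 : ℝ) * (1 / 4) = 1 / 2 by norm_num, binEnt_half]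
      · rw [min_eq_left (by linarith), binEnt_eq, binEnt_eq, ← Real.binEntropy_one_sub]
        ring_nf
    rw [e] at h
    refine h.congr fun n => ?_
    rw [← card_C5Free_compl n _ (hle n)]
    rfl
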